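/- Let n ≥ 3 and let Ω be a convex compact subset of ℝⁿ with nonempty interior and smooth boundary. Then for every x ∈ ℝⁿ, ∫_{∂Ω}|x−y|^{2−n} (dσ(y)/σ_{n−1}) ≤ (n−1)·(area(∂Ω)/σ_{n−1})^{1/(n−1)}, where the integral is with respect to the (n−1)-dimensional Hausdorff measure σ on ∂Ω. -/

import Mathlib

open MeasureTheory Metric Set Filter

/-- The variational `p`-capacity of a set `Ω ⊆ ℝⁿ`:
`cap_p(Ω) = inf {∫ |∇f|^p : f ∈ C_c^∞(ℝⁿ), f ≥ 1 on Ω}`. -/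
noncomputable def pCap (n : ℕ) (p : ℝ) (Ω : Set (EuclideanSpace ℝ (Fin n))) : ℝ :=
  sInf { E : ℝ | ∃ f : EuclideanSpace ℝ (Fin n) → ℝ, ContDiff ℝ (⊤ : ℕ∞) f ∧ HasCompactSupport f ∧
      (∀ x ∈ Ω, 1 ≤ f x) ∧ E = ∫ x, ‖fderiv ℝ f x‖ ^ p }

/-- `σ_{n-1}`: the `(n-1)`-dimensional Hausdorff measure of the unit sphere in `ℝⁿ`. -/
noncomputable def sphereArea (n : ℕ) : ℝ :=
  ((μH[(n : ℝ) - 1] : Measure (EuclideanSpace ℝ (Fin n)))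
    (Metric.sphere (0 : EuclideanSpace ℝ (Fin n)) 1)).toReal

/-- The `(n-1)`-dimensional Hausdorff measure (surface area) of a set in `ℝⁿ`. -/
noncomputable def area (n : ℕ) (s : Set (EuclideanSpace ℝ (Fin n))) : ℝ :=
  ((μH[(n : ℝ) - 1] : Measure (EuclideanSpace ℝ (Fin n))) s).toReal

/-- A set `Ω ⊆ ℝⁿ` has smooth (C^∞) boundary: near each boundary point, the
boundary is the regular zero set of a smooth real-valued function. -/
def HasSmoothBoundary (n : ℕ) (Ω : Set (EuclideanSpace ℝ (Fin n))) : Prop :=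
  ∀ x ∈ frontier Ω, ∃ (U : Set (EuclideanSpace ℝ (Fin n))) (f : EuclideanSpace ℝ (Fin n) → ℝ),
    IsOpen U ∧ x ∈ U ∧ ContDiff ℝ (⊤ : ℕ∞) f ∧ (∀ y ∈ U, fderiv ℝ f y ≠ 0) ∧
    U ∩ frontier Ω = U ∩ f ⁻¹' {0}

/-!
If every point of `A` can be pushed to a point of `B` along an outward normal of `A`, then pushing
does not decrease distances, so `A` has no larger Hausdorff measure than `B`. Pushing the part of
the boundary of a convex set `Ω` inside a ball of radius `r` out to the bounding sphere shows that
`∂Ω` has mass at most `σ_{n-1} r ^ (n-1)` in that ball. Among the measures with this growth and with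
given total mass, the potential is largest when the mass is packed as tightly as the growth allows
around `x`, which is what the layer cake formula computes.
-/

section NormalDisplacement

lemma hausdorffMeasure_le_hausdorffMeasure_image_of_dist_le {X Y : Type*} [MetricSpace X]
    [MeasurableSpace X] [BorelSpace X] [MetricSpace Y] [MeasurableSpace Y] [BorelSpace Y]
    {f : X → Y} {A : Set X} {d : ℝ} (hd : 0 ≤ d)
    (hf : ∀ y ∈ A, ∀ y' ∈ A, dist y y' ≤ dist (f y) (f y')) : μH[d] A ≤ μH[d] (f '' A) := by
  have hanti : AntilipschitzWith 1 (A.domRestrict f) :=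
    AntilipschitzWith.of_le_mul_dist fun y y' => by
      rw [NNReal.coe_one, one_mul]
      exact hf y y.2 y' y'.2
  calc μH[d] A = μH[d] (univ : Set A) := by
        rw [← (isometry_subtype_coe (s := A)).hausdorffMeasure_image (.inl hd), image_univ,
          Subtype.range_coe]
    _ ≤ μH[d] (A.domRestrict f '' univ) := by simpa using hanti.le_hausdorffMeasure_image hd univ
    _ = μH[d] (f '' A) := by rw [image_univ, range_domRestrict]

variable {E : Type*} [NormedAddCommGroup E] [InnerProductSpace ℝ E]

lemma dist_le_dist_of_inner_nonpos {y y' z z' : E} (h : inner ℝ (z - y) (y' - y) ≤ 0)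
    (h' : inner ℝ (z' - y') (y - y') ≤ 0) : dist y y' ≤ dist z z' := by
  rw [dist_eq_norm, dist_eq_norm]
  have hsq : ‖y - y'‖ * ‖y - y'‖ ≤ ‖z - z'‖ * ‖y - y'‖ :=
    calc ‖y - y'‖ * ‖y - y'‖ = inner ℝ (y - y') (y - y') :=
          (real_inner_self_eq_norm_mul_norm _).symm
      _ ≤ inner ℝ (z - z') (y - y') := by
          simp only [inner_sub_left, inner_sub_right] at h h' ⊢
          linarith
      _ ≤ ‖z - z'‖ * ‖y - y'‖ := real_inner_le_norm _ _
  rcases (norm_nonneg (y - y')).eq_or_lt with hzero | hpos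
  · exact hzero ▸ norm_nonneg _
  · exact le_of_mul_le_mul_right hsq hpos

lemma hausdorffMeasure_le_of_forall_exists_inner_nonpos [MeasurableSpace E] [BorelSpace E]
    {A B : Set E} {d : ℝ} (hd : 0 ≤ d)
    (h : ∀ y ∈ A, ∃ z ∈ B, ∀ y' ∈ A, inner ℝ (z - y) (y' - y) ≤ 0) : μH[d] A ≤ μH[d] B := by
  choose! f hfB hf using h
  calc μH[d] A ≤ μH[d] (f '' A) :=
        hausdorffMeasure_le_hausdorffMeasure_image_of_dist_le hd fun y hy y' hy' =>
          dist_le_dist_of_inner_nonpos (hf y hy y' hy') (hf y' hy' y hy)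
    _ ≤ μH[d] B := measure_mono (image_subset_iff.2 hfB)

end NormalDisplacement

section ConvexFrontier

lemma exists_add_smul_mem_frontier {E : Type*} [NormedAddCommGroup E] [NormedSpace ℝ E]
    {L : Set E} (hL : Bornology.IsBounded L) {y v : E} (hy : y ∈ L) (hv : v ≠ 0) :
    ∃ t : ℝ, 0 ≤ t ∧ y + t • v ∈ frontier L := by
  obtain ⟨T, hT⟩ : ∃ T : ℝ, y + |T| • v ∉ L := by
    obtain ⟨r, hr⟩ := hL.subset_closedBall y
    by_contra! hmem
    have hdist := hr (hmem ((r + 1) / ‖v‖))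
    rw [mem_closedBall, dist_self_add_left, norm_smul, norm_abs_eq_norm, norm_div, norm_norm,
      div_mul_cancel₀ _ (norm_ne_zero_iff.2 hv), Real.norm_eq_abs] at hdist
    linarith [le_abs_self (r + 1)]
  have hcont : Continuous fun t : ℝ => y + |t| • v := by fun_prop
  obtain ⟨t, ht⟩ : (frontier ((fun t : ℝ => y + |t| • v) ⁻¹' L)).Nonempty :=
    nonempty_frontier_iff.2 ⟨⟨0, by simpa using hy⟩, (ne_univ_iff_exists_notMem _).2 ⟨T, hT⟩⟩
  exact ⟨|t|, abs_nonneg t, hcont.frontier_preimage_subset L ht⟩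

variable {E : Type*} [NormedAddCommGroup E] [InnerProductSpace ℝ E] [FiniteDimensional ℝ E]

lemma exists_outer_normal_of_mem_frontier {K : Set E} (hK : Convex ℝ K) {y : E}
    (hy : y ∈ frontier K) : ∃ v : E, v ≠ 0 ∧ ∀ w ∈ closure K, inner ℝ v (w - y) ≤ 0 := by
  suffices h : ∃ v : E, v ≠ 0 ∧ ∀ w ∈ K, inner ℝ v (w - y) ≤ 0 by
    obtain ⟨v, hv, hvK⟩ := h
    have hclosed : IsClosed {w : E | inner ℝ v (w - y) ≤ 0} :=
      isClosed_le (by fun_prop) continuous_const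
    exact ⟨v, hv, closure_minimal hvK hclosed⟩
  by_cases hint : (interior K).Nonempty
  · obtain ⟨f, hf, hfK⟩ := geometric_hahn_banach_of_nonempty_interior_point hK hy.2 hint
    refine ⟨(InnerProductSpace.toDual ℝ E).symm f, by simpa using hf, fun w hw => ?_⟩
    rw [InnerProductSpace.toDual_symm_apply, map_sub, sub_nonpos]
    exact hfK w hw
  -- Without interior points, `K` lies in a proper affine subspace, and any `v` normal to it works.
  · have hyK : y ∈ affineSpan ℝ K :=
      closure_minimal (subset_affineSpan ℝ K) (AffineSubspace.closed_of_finiteDimensional _) hy.1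
    have hdir : (affineSpan ℝ K).direction ≠ ⊤ := by
      rwa [Ne, AffineSubspace.direction_eq_top_iff_of_nonempty ⟨y, hyK⟩,
        ← hK.interior_nonempty_iff_affineSpan_eq_top]
    obtain ⟨v, hv, hv0⟩ := Submodule.exists_mem_ne_zero_of_ne_bot
      (mt Submodule.orthogonal_eq_bot_iff.1 hdir)
    exact ⟨v, hv0, fun w hw => (Submodule.inner_left_of_mem_orthogonal
      (AffineSubspace.vsub_mem_direction (subset_affineSpan ℝ K hw) hyK) hv).le⟩

lemma hausdorffMeasure_frontier_inter_le [MeasurableSpace E] [BorelSpace E] {K L : Set E}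
    (hK : Convex ℝ K) (hL : Bornology.IsBounded L) {d : ℝ} (hd : 0 ≤ d) :
    μH[d] (frontier K ∩ L) ≤ μH[d] (frontier L) := by
  refine hausdorffMeasure_le_of_forall_exists_inner_nonpos hd fun y ⟨hyK, hyL⟩ => ?_
  obtain ⟨v, hv, hvK⟩ := exists_outer_normal_of_mem_frontier hK hyK
  obtain ⟨t, ht, hz⟩ := exists_add_smul_mem_frontier hL hyL hv
  refine ⟨y + t • v, hz, fun y' ⟨hyK', _⟩ => ?_⟩
  rw [add_sub_cancel_left, real_inner_smul_left]
  exact mul_nonpos_of_nonneg_of_nonpos ht (hvK y' hyK'.1)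

end ConvexFrontier

section Sphere

open scoped Pointwise in
lemma hausdorffMeasure_sphere {E : Type*} [NormedAddCommGroup E] [NormedSpace ℝ E]
    [MeasurableSpace E] [BorelSpace E] {d : ℝ} (hd : 0 ≤ d) (x : E) {r : ℝ} (hr : 0 < r) :
    μH[d] (sphere x r) = ENNReal.ofReal (r ^ d) * μH[d] (sphere (0 : E) 1) := by
  have hsphere : sphere x r = x +ᵥ r • sphere (0 : E) 1 := by
    rw [smul_sphere' hr.ne', vadd_sphere, smul_zero, vadd_eq_add, add_zero, mul_one,
      Real.norm_of_nonneg hr.le]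
  rw [hsphere, hausdorffMeasure_vadd _ (.inl hd), Measure.hausdorffMeasure_smul₀ hd hr.ne',
    ENNReal.smul_def, smul_eq_mul, ← ENNReal.ofReal_coe_nnreal, NNReal.coe_rpow, coe_nnnorm,
    Real.norm_of_nonneg hr.le]

variable {E : Type*} [NormedAddCommGroup E] [InnerProductSpace ℝ E] [MeasurableSpace E]
  [BorelSpace E] {n : ℕ} [Fact (Module.finrank ℝ E = n + 1)]

-- The sphere lies above the unit ball of the hyperplane orthogonal to any unit vector.
lemma hausdorffMeasure_unitSphere_pos : 0 < μH[n] (sphere (0 : E) 1) := by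
  have : FiniteDimensional ℝ E := .of_fact_finrank_eq_succ n
  have : Nontrivial E :=
    Module.nontrivial_of_finrank_eq_succ (Fact.out : Module.finrank ℝ E = n + 1)
  obtain ⟨v, hv⟩ := exists_norm_eq E zero_le_one
  have hrank : Module.finrank ℝ (ℝ ∙ v)ᗮ = n :=
    Submodule.finrank_orthogonal_span_singleton (norm_ne_zero_iff.1 (hv ▸ one_ne_zero))
  have horth (u : (ℝ ∙ v)ᗮ) : inner ℝ v (u : E) = 0 :=
    Submodule.mem_orthogonal_singleton_iff_inner_right.1 u.2
  calc 0 < μH[n] (closedBall (0 : (ℝ ∙ v)ᗮ) 1) := by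
        rw [← hrank]
        exact measure_closedBall_pos _ _ one_pos
    _ = μH[n] ((↑) '' closedBall (0 : (ℝ ∙ v)ᗮ) 1 : Set E) :=
        (isometry_subtype_coe.hausdorffMeasure_image (.inl n.cast_nonneg) _).symm
    _ ≤ μH[n] (sphere (0 : E) 1) := by
        refine hausdorffMeasure_le_of_forall_exists_inner_nonpos n.cast_nonneg ?_
        rintro _ ⟨u, hu, rfl⟩
        rw [mem_closedBall_zero_iff] at hu
        have hheight : 0 ≤ 1 - ‖(u : E)‖ ^ 2 := sub_nonneg.2 (pow_le_one₀ (norm_nonneg _) hu)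
        refine ⟨u + √(1 - ‖(u : E)‖ ^ 2) • v, ?_, ?_⟩
        · rw [mem_sphere_zero_iff_norm, ← sq_eq_sq₀ (norm_nonneg _) zero_le_one, norm_add_sq_real,
            norm_smul, hv, real_inner_smul_right, real_inner_comm, horth, Real.norm_eq_abs, mul_one,
            sq_abs, Real.sq_sqrt hheight]
          ring
        · rintro _ ⟨u', -, rfl⟩
          simp [real_inner_smul_left, inner_sub_right, horth]

-- Central projection pushes the cap outward into the tangent hyperplane at `v`.
lemma hausdorffMeasure_unitSphere_inter_cap_lt_top {v : E} (hv : ‖v‖ = 1) :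
    μH[n] (sphere (0 : E) 1 ∩ {y | 1 / 2 < inner ℝ v y}) < ⊤ := by
  have : FiniteDimensional ℝ E := .of_fact_finrank_eq_succ n
  have hrank : Module.finrank ℝ (ℝ ∙ v)ᗮ = n :=
    Submodule.finrank_orthogonal_span_singleton (norm_ne_zero_iff.1 (hv ▸ one_ne_zero))
  calc μH[n] (sphere (0 : E) 1 ∩ {y | 1 / 2 < inner ℝ v y})
      ≤ μH[n] ((fun u : (ℝ ∙ v)ᗮ => v + u) '' closedBall 0 3) := by
        refine hausdorffMeasure_le_of_forall_exists_inner_nonpos n.cast_nonneg ?_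
        rintro y ⟨hy, hyv : 1 / 2 < inner ℝ v y⟩
        rw [mem_sphere_zero_iff_norm] at hy
        set c : ℝ := inner ℝ v y with hc
        have hc_one_le : 1 ≤ c⁻¹ :=
          (one_le_inv₀ (by linarith)).2 (by simpa [hv, hy] using real_inner_le_norm v y)
        have hc_le_two : c⁻¹ ≤ 2 := by simpa using inv_anti₀ (by norm_num) hyv.le
        have hperp : c⁻¹ • y - v ∈ (ℝ ∙ v)ᗮ := by
          rw [Submodule.mem_orthogonal_singleton_iff_inner_right, inner_sub_right,
            real_inner_smul_right, real_inner_self_eq_norm_sq, hv, ← hc,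
            inv_mul_cancel₀ (by linarith), one_pow, sub_self]
        refine ⟨c⁻¹ • y, ⟨⟨_, hperp⟩, ?_, add_sub_cancel _ _⟩, ?_⟩
        · rw [mem_closedBall_zero_iff]
          calc ‖c⁻¹ • y - v‖ ≤ ‖c⁻¹ • y‖ + ‖v‖ := norm_sub_le _ _
            _ = c⁻¹ + 1 := by
              rw [norm_smul, hy, hv, Real.norm_of_nonneg (by linarith), mul_one]
            _ ≤ 3 := by linarith
        · rintro y' ⟨hy', -⟩
          rw [mem_sphere_zero_iff_norm] at hy'
          have hyy' : inner ℝ y y' ≤ (1 : ℝ) := by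
            simpa [hy, hy'] using real_inner_le_norm y y'
          calc inner ℝ (c⁻¹ • y - y) (y' - y) = (c⁻¹ - 1) * (inner ℝ y y' - 1) := by
                rw [inner_sub_left, real_inner_smul_left, inner_sub_right,
                  real_inner_self_eq_norm_sq, hy]
                ring
            _ ≤ 0 := mul_nonpos_of_nonneg_of_nonpos (by linarith) (by linarith)
    _ = μH[n] (closedBall (0 : (ℝ ∙ v)ᗮ) 3) :=
        ((IsometryEquiv.addLeft v).isometry.comp isometry_subtype_coe).hausdorffMeasure_image
          (.inl n.cast_nonneg) _
    _ < ⊤ := by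
        rw [← hrank]
        exact measure_closedBall_lt_top

lemma hausdorffMeasure_unitSphere_lt_top : μH[n] (sphere (0 : E) 1) < ⊤ := by
  have : FiniteDimensional ℝ E := .of_fact_finrank_eq_succ n
  refine (isCompact_sphere (0 : E) 1).measure_lt_top_of_nhdsWithin fun v hv => ?_
  rw [mem_sphere_zero_iff_norm] at hv
  refine ⟨_, inter_mem_nhdsWithin _ ?_, hausdorffMeasure_unitSphere_inter_cap_lt_top hv⟩
  refine (isOpen_lt continuous_const (by fun_prop)).mem_nhds ?_
  rw [mem_ofPred_eq, real_inner_self_eq_norm_sq, hv]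
  norm_num

end Sphere

section Potential

lemma lintegral_Ioc_rpow {a T : ℝ} (ha : -1 < a) (hT : 0 ≤ T) :
    ∫⁻ t in Ioc 0 T, ENNReal.ofReal (t ^ a) = ENNReal.ofReal (T ^ (a + 1) / (a + 1)) := by
  have hint : IntegrableOn (fun t : ℝ => t ^ a) (Ioc 0 T) :=
    (intervalIntegrable_iff_integrableOn_Ioc_of_le hT).1
      (intervalIntegral.intervalIntegrable_rpow' ha)
  rw [← ofReal_integral_eq_lintegral_ofReal hint, ← intervalIntegral.integral_of_le hT,
    integral_rpow (.inl ha), Real.zero_rpow (by linarith), sub_zero]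
  exact ae_restrict_of_forall_mem measurableSet_Ioc fun t ht => Real.rpow_nonneg ht.1.le a

lemma lintegral_Ioi_rpow_of_lt {a T : ℝ} (ha : a < -1) (hT : 0 < T) :
    ∫⁻ t in Ioi T, ENNReal.ofReal (t ^ a) = ENNReal.ofReal (-T ^ (a + 1) / (a + 1)) := by
  rw [← ofReal_integral_eq_lintegral_ofReal (integrableOn_Ioi_rpow_of_lt ha hT),
    integral_Ioi_rpow_of_lt ha hT]
  exact ae_restrict_of_forall_mem measurableSet_Ioi fun t ht => Real.rpow_nonneg (hT.trans ht).le a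

variable {X : Type*} [PseudoMetricSpace X] [MeasurableSpace X] {μ : Measure X} {x : X}
  {d p s R : ℝ}

lemma setLIntegral_Ioc_measure_lt_inv_dist_le (hp : 0 < p) (hs : 0 ≤ s) (hR : 0 < R)
    (huniv : μ univ ≤ ENNReal.ofReal (s * R ^ d)) :
    ∫⁻ t in Ioc 0 R⁻¹, μ {y | t < (dist x y)⁻¹} * ENNReal.ofReal (t ^ (p - 1)) ≤
      ENNReal.ofReal (s * R ^ (d - p) / p) := by
  calc ∫⁻ t in Ioc 0 R⁻¹, μ {y | t < (dist x y)⁻¹} * ENNReal.ofReal (t ^ (p - 1))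
      ≤ ∫⁻ t in Ioc 0 R⁻¹, ENNReal.ofReal (s * R ^ d) * ENNReal.ofReal (t ^ (p - 1)) := by
        gcongr with t
        exact (measure_mono (subset_univ _)).trans huniv
    _ = ENNReal.ofReal (s * R ^ (d - p) / p) := by
        rw [lintegral_const_mul' _ _ ENNReal.ofReal_ne_top,
          lintegral_Ioc_rpow (by linarith) (inv_nonneg.2 hR.le),
          ← ENNReal.ofReal_mul (by positivity), sub_add_cancel, Real.inv_rpow hR.le,
          Real.rpow_sub hR]
        congr 1
        field_simp

lemma setLIntegral_Ioi_measure_lt_inv_dist_le (hpd : p < d) (hs : 0 ≤ s) (hR : 0 < R)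
    (hball : ∀ r > 0, μ (closedBall x r) ≤ ENNReal.ofReal (s * r ^ d)) :
    ∫⁻ t in Ioi R⁻¹, μ {y | t < (dist x y)⁻¹} * ENNReal.ofReal (t ^ (p - 1)) ≤
      ENNReal.ofReal (s * R ^ (d - p) / (d - p)) := by
  have hR' : 0 < R⁻¹ := inv_pos.2 hR
  have hsub : ∀ t > 0, {y | t < (dist x y)⁻¹} ⊆ closedBall x t⁻¹ := fun t ht y hy => by
    have hxy : 0 < dist x y := inv_pos.1 (ht.trans hy)
    rw [mem_closedBall']
    exact (lt_inv_comm₀ ht hxy).1 hy |>.le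
  calc ∫⁻ t in Ioi R⁻¹, μ {y | t < (dist x y)⁻¹} * ENNReal.ofReal (t ^ (p - 1))
      ≤ ∫⁻ t in Ioi R⁻¹, ENNReal.ofReal s * ENNReal.ofReal (t ^ (p - 1 - d)) := by
        refine setLIntegral_mono' measurableSet_Ioi fun t ht => ?_
        have ht0 : 0 < t := hR'.trans ht
        calc μ {y | t < (dist x y)⁻¹} * ENNReal.ofReal (t ^ (p - 1))
            ≤ ENNReal.ofReal (s * t⁻¹ ^ d) * ENNReal.ofReal (t ^ (p - 1)) := by
              gcongr
              exact (measure_mono (hsub t ht0)).trans (hball _ (inv_pos.2 ht0))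
          _ = ENNReal.ofReal s * ENNReal.ofReal (t ^ (p - 1 - d)) := by
              rw [← ENNReal.ofReal_mul (by positivity), ← ENNReal.ofReal_mul hs,
                Real.inv_rpow ht0.le, Real.rpow_sub ht0 (p - 1)]
              congr 1
              field_simp
    _ = ENNReal.ofReal (s * R ^ (d - p) / (d - p)) := by
        rw [lintegral_const_mul' _ _ ENNReal.ofReal_ne_top,
          lintegral_Ioi_rpow_of_lt (by linarith) hR', ← ENNReal.ofReal_mul hs,
          show p - 1 - d + 1 = -(d - p) by ring,
          Real.inv_rpow hR.le, Real.rpow_neg hR.le, inv_inv, neg_div_neg_eq, mul_div_assoc]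

lemma lintegral_dist_rpow_neg_le_of_measure_univ_le [OpensMeasurableSpace X] (hp : 0 < p)
    (hpd : p < d) (hs : 0 ≤ s) (hR : 0 < R) (huniv : μ univ ≤ ENNReal.ofReal (s * R ^ d))
    (hball : ∀ r > 0, μ (closedBall x r) ≤ ENNReal.ofReal (s * r ^ d)) :
    ∫⁻ y, ENNReal.ofReal (dist x y ^ (-p)) ∂μ ≤ ENNReal.ofReal (d / (d - p) * s * R ^ (d - p)) := by
  have hdp : 0 < d - p := sub_pos.2 hpd
  calc ∫⁻ y, ENNReal.ofReal (dist x y ^ (-p)) ∂μ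
      = ∫⁻ y, ENNReal.ofReal ((dist x y)⁻¹ ^ p) ∂μ := by
        simp only [Real.inv_rpow dist_nonneg, Real.rpow_neg dist_nonneg]
    _ = ENNReal.ofReal p *
          ((∫⁻ t in Ioc 0 R⁻¹, μ {y | t < (dist x y)⁻¹} * ENNReal.ofReal (t ^ (p - 1))) +
          ∫⁻ t in Ioi R⁻¹, μ {y | t < (dist x y)⁻¹} * ENNReal.ofReal (t ^ (p - 1))) := by
        rw [lintegral_rpow_eq_lintegral_meas_lt_mul μ
          (ae_of_all _ fun y => inv_nonneg.2 dist_nonneg) (by fun_prop) hp,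
          ← Ioc_union_Ioi_eq_Ioi (inv_nonneg.2 hR.le),
          lintegral_union measurableSet_Ioi (Ioc_disjoint_Ioi le_rfl)]
    _ ≤ ENNReal.ofReal p * (ENNReal.ofReal (s * R ^ (d - p) / p) +
          ENNReal.ofReal (s * R ^ (d - p) / (d - p))) := by
        gcongr
        · exact setLIntegral_Ioc_measure_lt_inv_dist_le hp hs hR huniv
        · exact setLIntegral_Ioi_measure_lt_inv_dist_le hpd hs hR hball
    _ = ENNReal.ofReal (d / (d - p) * s * R ^ (d - p)) := by
        rw [← ENNReal.ofReal_add (by positivity) (by positivity), ← ENNReal.ofReal_mul hp.le]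
        congr 1
        field_simp
        ring

lemma integral_dist_rpow_neg_le [OpensMeasurableSpace X] [IsFiniteMeasure μ] (hp : 0 ≤ p)
    (hpd : p < d) (hs : 0 < s)
    (hball : ∀ r > 0, μ.real (closedBall x r) ≤ s * r ^ d) :
    ∫ y, dist x y ^ (-p) ∂μ ≤ d / (d - p) * s * (μ.real univ / s) ^ ((d - p) / d) := by
  have hd : 0 < d := hp.trans_lt hpd
  rcases eq_zero_or_neZero μ with rfl | hμ
  · simp [(div_pos (sub_pos.2 hpd) hd).ne']
  rcases hp.eq_or_lt with rfl | hp
  · simp [div_self hd.ne', mul_div_cancel₀ _ hs.ne']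
  have hmass : 0 < μ.real univ / s := div_pos measureReal_univ_pos hs
  set R := (μ.real univ / s) ^ d⁻¹ with hRdef
  have hR : 0 < R := Real.rpow_pos_of_pos hmass _
  have hRd : R ^ (d - p) = (μ.real univ / s) ^ ((d - p) / d) := by
    rw [hRdef, ← Real.rpow_mul hmass.le, inv_mul_eq_div]
  have huniv : μ univ = ENNReal.ofReal (s * R ^ d) := by
    rw [hRdef, Real.rpow_inv_rpow hmass.le hd.ne', mul_div_cancel₀ _ hs.ne', ofReal_measureReal]
  have hmeas : Measurable fun y => dist x y ^ (-p) := by fun_prop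
  rw [integral_eq_lintegral_of_nonneg_ae (ae_of_all _ fun y => Real.rpow_nonneg dist_nonneg _)
    hmeas.aestronglyMeasurable, ← hRd]
  refine ENNReal.toReal_le_of_le_ofReal (by have := sub_pos.2 hpd; positivity) ?_
  refine lintegral_dist_rpow_neg_le_of_measure_univ_le hp hpd hs.le hR huniv.le fun r hr => ?_
  rw [← ofReal_measureReal]
  exact ENNReal.ofReal_le_ofReal (hball r hr)

end Potential

section EuclideanSpace

variable {n : ℕ}

lemma sphereArea_pos (hn : n ≠ 0) : 0 < sphereArea n := by
  obtain ⟨k, rfl⟩ := Nat.exists_eq_succ_of_ne_zero hn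
  have : Fact (Module.finrank ℝ (EuclideanSpace ℝ (Fin (k + 1))) = k + 1) :=
    ⟨finrank_euclideanSpace_fin⟩
  rw [sphereArea, Nat.cast_succ, add_sub_cancel_right]
  exact ENNReal.toReal_pos hausdorffMeasure_unitSphere_pos.ne'
    hausdorffMeasure_unitSphere_lt_top.ne

lemma hausdorffMeasure_frontier_inter_closedBall_le (hn : n ≠ 0)
    {Ω : Set (EuclideanSpace ℝ (Fin n))} (hΩ : Convex ℝ Ω) (x : EuclideanSpace ℝ (Fin n))
    {r : ℝ} (hr : 0 < r) :
    μH[(n : ℝ) - 1] (frontier Ω ∩ closedBall x r) ≤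
      ENNReal.ofReal (sphereArea n * r ^ ((n : ℝ) - 1)) := by
  have hd : (0 : ℝ) ≤ n - 1 := sub_nonneg.2 (mod_cast Nat.one_le_iff_ne_zero.2 hn)
  have hsphere : μH[(n : ℝ) - 1] (sphere (0 : EuclideanSpace ℝ (Fin n)) 1) =
      ENNReal.ofReal (sphereArea n) :=
    (ENNReal.ofReal_toReal (ENNReal.toReal_pos_iff.1 (sphereArea_pos hn)).2.ne).symm
  calc μH[(n : ℝ) - 1] (frontier Ω ∩ closedBall x r)
      ≤ μH[(n : ℝ) - 1] (frontier (closedBall x r)) :=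
        hausdorffMeasure_frontier_inter_le hΩ isBounded_closedBall hd
    _ = ENNReal.ofReal (sphereArea n * r ^ ((n : ℝ) - 1)) := by
        rw [frontier_closedBall x hr.ne', hausdorffMeasure_sphere hd x hr, hsphere,
          ← ENNReal.ofReal_mul (by positivity), mul_comm]

lemma hausdorffMeasure_frontier_lt_top (hn : n ≠ 0) {Ω : Set (EuclideanSpace ℝ (Fin n))}
    (hΩ : Convex ℝ Ω) (hbdd : Bornology.IsBounded Ω) : μH[(n : ℝ) - 1] (frontier Ω) < ⊤ := by
  obtain ⟨r, hr, hsub⟩ := hbdd.closure.subset_closedBall_lt 0 0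
  rw [← inter_eq_left.2 (frontier_subset_closure.trans hsub)]
  exact (hausdorffMeasure_frontier_inter_closedBall_le hn hΩ 0 hr).trans_lt ENNReal.ofReal_lt_top

end EuclideanSpace

theorem boundary_potential_le_general
    (n : ℕ) (Ω : Set (EuclideanSpace ℝ (Fin n))) (hconv : Convex ℝ Ω)
    (hbdd : Bornology.IsBounded Ω) {p : ℝ} (hp : 0 ≤ p) (hpn : p < (n : ℝ) - 1)
    (x : EuclideanSpace ℝ (Fin n)) :
    (∫ y in frontier Ω, ‖x - y‖ ^ (-p)
        ∂(μH[(n : ℝ) - 1] : Measure (EuclideanSpace ℝ (Fin n)))) / sphereArea n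
      ≤ ((n : ℝ) - 1) / ((n : ℝ) - 1 - p) *
        (area n (frontier Ω) / sphereArea n) ^ (((n : ℝ) - 1 - p) / ((n : ℝ) - 1)) := by
  have hn : n ≠ 0 := by
    rintro rfl
    norm_num at hpn
    linarith
  have hfin : IsFiniteMeasure (μH[(n : ℝ) - 1].restrict (frontier Ω)) :=
    isFiniteMeasure_restrict.2 (hausdorffMeasure_frontier_lt_top hn hconv hbdd).ne
  have hpot := integral_dist_rpow_neg_le (μ := μH[(n : ℝ) - 1].restrict (frontier Ω)) (x := x)
    hp hpn (sphereArea_pos hn) fun r hr => by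
      rw [measureReal_restrict_apply measurableSet_closedBall, inter_comm]
      have hs := sphereArea_pos hn
      exact ENNReal.toReal_le_of_le_ofReal (by positivity)
        (hausdorffMeasure_frontier_inter_closedBall_le hn hconv x hr)
  rw [measureReal_restrict_apply_univ] at hpot
  rw [div_le_iff₀ (sphereArea_pos hn), mul_right_comm]
  simpa only [dist_eq_norm, area, Measure.real] using hpot

/-- Inequality (2.4): the normalized Newtonian potential of the boundary surface
measure of a smooth convex body is bounded by `(n-1)·(area(∂Ω)/σ_{n-1})^{1/(n-1)}`. -/
theorem boundary_potential_le
    (n : ℕ) (hn : 3 ≤ n)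
    (Ω : Set (EuclideanSpace ℝ (Fin n))) (hconv : Convex ℝ Ω) (hcomp : IsCompact Ω)
    (hint : (interior Ω).Nonempty) (hsm : HasSmoothBoundary n Ω)
    (x : EuclideanSpace ℝ (Fin n)) :
    (∫ y in frontier Ω, ‖x - y‖ ^ ((2 : ℝ) - (n : ℝ))
        ∂(μH[(n : ℝ) - 1] : Measure (EuclideanSpace ℝ (Fin n)))) / sphereArea n
      ≤ ((n : ℝ) - 1) * (area n (frontier Ω) / sphereArea n) ^ ((1 : ℝ) / ((n : ℝ) - 1)) := by
  have hexp : (n : ℝ) - 1 - (n - 2) = 1 := by ring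
  have hn' : (3 : ℝ) ≤ n := mod_cast hn
  simpa only [hexp, neg_sub, div_one] using boundary_potential_le_general n Ω hconv
    hcomp.isBounded (p := n - 2) (by linarith) (by linarith) x
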